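/- Let G be a group of orientation-preserving PL homeomorphisms of [0,1], X ⊂ (0,1) a dense G-invariant set. Suppose H ≤ G is classful, H acts transitively on X, and the breaks of every g ∈ G lie in X, and G satisfies: for any t ∈ X and any g ∈ G fixing t there is g̃ ∈ G equal to the identity on [0,t] and equal to g on [t,1]. Then for every interval I = [t,1] with t ∈ X, the group H(I) = {h|_I : h ∈ H, Supp(h) ⊂ I} is classful in G(I) = {g|_I : g ∈ G, Supp(g) ⊂ I}. -/

import Mathlib

open Set

/-- An orientation-preserving piecewise linear homeomorphism of `[0,1]`,
viewed as a map of `ℝ` extended by the identity outside `[0,1]`. -/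
def IsPLHomeo (f : ℝ → ℝ) : Prop :=
  Function.Bijective f ∧ StrictMono f ∧ f 0 = 0 ∧ f 1 = 1 ∧
  (∀ x, x ∉ Icc (0 : ℝ) 1 → f x = x) ∧
  ∃ n : ℕ, ∃ x : Fin (n + 1) → ℝ, StrictMono x ∧ x 0 = 0 ∧ x (Fin.last n) = 1 ∧
    ∀ i : Fin n, ∃ c d : ℝ, ∀ t ∈ Icc (x i.castSucc) (x i.succ), f t = c * t + d

/-- The support of a map: the closure of its set of non-fixed points. -/
def Supp (f : ℝ → ℝ) : Set ℝ := closure {x | f x ≠ x}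

/-- Lemma on classfulness of `H(I)` in `G(I)` for intervals `I = [t,1]`:
under conditions A(1), A(3) and B, if `H ≤ G` is classful then for every `t ∈ X` and
every `f ∈ G` supported in `[t,1]`, some conjugate of `f` by an element of `G`
supported in `[t,1]` lies in `H`. -/
theorem classful_restriction_to_right_intervals
    (X : Set ℝ) (hX : X ⊆ Ioo 0 1)
    (hXdense : ∀ u v : ℝ, 0 ≤ u → u < v → v ≤ 1 → ∃ x ∈ X, u < x ∧ x < v)
    (G H : Subgroup (Equiv.Perm ℝ))
    (hGPL : ∀ g ∈ G, IsPLHomeo g)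
    (hHG : H ≤ G)
    (hXinv : ∀ g ∈ G, ∀ x ∈ X, g x ∈ X)
    (hbreaks : ∀ g ∈ G, ∀ t ∈ Ioo (0:ℝ) 1, t ∉ X →
      ∃ ε > (0:ℝ), ∃ c d : ℝ, ∀ s ∈ Icc (t - ε) (t + ε), g s = c * s + d)
    (hclassful : ∀ g ∈ G, ∃ x ∈ G, x * g * x⁻¹ ∈ H)
    (htrans : ∀ x ∈ X, ∀ y ∈ X, ∃ h ∈ H, h x = y)
    (hfrag : ∀ t ∈ X, ∀ g ∈ G, g t = t →
      ∃ g' ∈ G, (∀ s : ℝ, s ≤ t → g' s = s) ∧ (∀ s : ℝ, t ≤ s → g' s = g s)) :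
    ∀ t ∈ X, ∀ f ∈ G, Supp ⇑f ⊆ Icc t 1 →
      ∃ g ∈ G, Supp ⇑g ⊆ Icc t 1 ∧ Supp ⇑(g * f * g⁻¹) ⊆ Icc t 1 ∧
        g * f * g⁻¹ ∈ H := by
  intro t ht f hf hsupp
  have ht01 := hX ht
  by_cases hne : ∃ x, f x ≠ x
  swap
  · push Not at hne
    have hf1 : f = 1 := Equiv.ext hne
    refine ⟨1, G.one_mem, ?_, ?_, ?_⟩
    · simp [Supp]
    · simp [Supp, hf1]
    · simp [hf1, H.one_mem]
  have hsub : {x | f x ≠ x} ⊆ Icc t 1 := subset_closure.trans hsupp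
  have hbdd : BddBelow {x | f x ≠ x} := ⟨t, fun x hx => (hsub hx).1⟩
  obtain ⟨s, hs⟩ : ∃ s, s = sInf {x | f x ≠ x} := ⟨_, rfl⟩
  have hlt : ∀ x, x < s → f x = x := by
    intro x hx
    by_contra h
    have := csInf_le hbdd (show x ∈ {x | f x ≠ x} from h)
    linarith
  have hnear : ∀ e > 0, ∃ x, f x ≠ x ∧ x < s + e := by
    intro e he
    obtain ⟨x, hx, hx'⟩ := exists_lt_of_csInf_lt (s := {x | f x ≠ x}) hne
      (show sInf {x | f x ≠ x} < s + e by linarith)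
    exact ⟨x, hx, hx'⟩
  obtain ⟨-, fmono, -, f1, -, -⟩ := hGPL f hf
  have hfs : f s = s := by
    rcases lt_trichotomy (f s) s with h | h | h
    · exact f.injective (hlt _ h)
    · exact h
    · obtain ⟨y, hy⟩ := f.surjective ((s + f s) / 2)
      have h1 : y < s := fmono.lt_iff_lt.1 (by rw [hy]; linarith)
      have := hlt y h1
      linarith
  have hle : ∀ x, x ≤ s → f x = x := by
    intro x hx
    rcases hx.lt_or_eq with h | h
    · exact hlt x h
    · rw [h, hfs]
  have hts : t ≤ s := by rw [hs]; exact le_csInf hne (fun x hx => (hsub hx).1)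
  have hs1 : s < 1 := by
    obtain ⟨x, hx⟩ := hne
    by_contra h
    exact hx (hle x ((hsub hx).2.trans (not_lt.1 h)))
  have hsX : s ∈ X := by
    by_contra hsX
    obtain ⟨e, he, c, d, hcd⟩ := hbreaks f hf s ⟨ht01.1.trans_le hts, hs1⟩ hsX
    have a1 := hcd (s - e) ⟨by linarith, by linarith⟩
    have a2 := hcd s ⟨by linarith, by linarith⟩
    rw [hlt _ (by linarith)] at a1
    rw [hfs] at a2
    have hc : c = 1 := by
      have : e * (c - 1) = 0 := by linarith
      rcases mul_eq_zero.1 this with h | h <;> linarith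
    obtain ⟨x, hx, hxe⟩ := hnear e he
    have hxs : s ≤ x := by
      by_contra h
      exact hx (hlt x (not_le.1 h))
    have := hcd x ⟨by linarith, by linarith⟩
    subst hc
    exact hx (by linarith)
  obtain ⟨x, hxG, hxH⟩ := hclassful f hf
  obtain ⟨h, hhH, hh⟩ := htrans (x s) (hXinv x hxG s hsX) s hsX
  obtain ⟨k, hk⟩ : ∃ k, k = h * x := ⟨_, rfl⟩
  have hkG : k ∈ G := hk ▸ G.mul_mem (hHG hhH) hxG
  have hks : k s = s := by rw [hk]; exact hh
  have hkH : k * f * k⁻¹ ∈ H := by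
    have e : k * f * k⁻¹ = h * (x * f * x⁻¹) * h⁻¹ := by rw [hk]; group
    rw [e]
    exact H.mul_mem (H.mul_mem hhH hxH) (H.inv_mem hhH)
  obtain ⟨-, kmono, -, -, -, -⟩ := hGPL k hkG
  obtain ⟨g, hgG, hg1, hg2⟩ := hfrag s hsX k hkG hks
  have heq : g * f * g⁻¹ = k * f * k⁻¹ := by
    rw [mul_inv_eq_iff_eq_mul]
    ext z
    simp only [Equiv.Perm.mul_apply]
    rcases le_total z s with hz | hz
    · have e2 : k⁻¹ (g z) ≤ s := by
        rw [hg1 z hz, ← kmono.le_iff_le, hks]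
        simpa using hz
      rw [hle z hz, hle _ e2]
      simp
    · have e1 : s ≤ f z := by
        have := fmono.monotone hz
        rwa [hfs] at this
      rw [hg2 z hz, hg2 _ e1]
      simp
  have key : ∀ u ∈ G, (∀ y, y ≤ s → u y = y) → Supp ⇑u ⊆ Icc t 1 := by
    intro u hu huy
    obtain ⟨-, -, -, -, hout, -⟩ := hGPL u hu
    refine closure_minimal ?_ isClosed_Icc
    intro y hy
    constructor
    · by_contra hc
      exact hy (huy y (by linarith [not_le.1 hc]))
    · by_contra hc
      exact hy (hout y (fun h => hc h.2))
  refine ⟨g, hgG, key g hgG hg1, key _ (G.mul_mem (G.mul_mem hgG hf) (G.inv_mem hgG)) ?_, heq ▸ hkH⟩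
  intro y hy
  have e : g⁻¹ y = y := by rw [Equiv.Perm.inv_eq_iff_eq, hg1 y hy]
  simp only [Equiv.Perm.mul_apply]
  rw [e, hle y hy, hg1 y hy]
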